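/- arXiv:2510.18285 — 2 statements merged into one kernel-verified Lean document; each statement's English description precedes it below -/
import Mathlib

section
/- Let N ≥ 2 be an integer, let a > 0 be real, and set k = ⌈a·log₂ N⌉. Under the uniform probability measure on the set of all k-tuples (g₁, …, g_k) of functions gᵢ : Fin N → Fin N², the probability that at least one gᵢ is injective is at least 1 − N^{−a}. -/
/-!
A uniformly random function `Fin N → Fin N²` fails to be injective with probability at most `1/2`
(the birthday bound: the number of injections is `M.descFactorial N ≥ M ^ N * (1 - N(N-1)/(2M))`
with `M = N²`). Tuples with no injective coordinate form a product set, so by independence their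
proportion is at most `2⁻ᵏ`, and `2⁻ᵏ ≤ N⁻ᵃ` as soon as `k ≥ a * log₂ N`.
-/

open Finset

/-- The birthday bound `M ^ n * (1 - n(n-1)/(2M)) ≤ M.descFactorial n`, cleared of denominators. -/
lemma birthday_descFactorial (M n : ℕ) (h : n ≤ M) :
    (M : ℝ) ^ n * (2 * M - n * (n - 1)) ≤ 2 * M * (M.descFactorial n : ℝ) := by
  induction n with
  | zero => simp
  | succ n ih =>
    have ih' := ih (by omega)
    have hn : (n : ℝ) ≤ M := by exact_mod_cast (by omega : n ≤ M)
    have h1 := mul_le_mul_of_nonneg_left ih' (sub_nonneg.2 hn)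
    have h2 : 0 ≤ (M : ℝ) ^ n * ((n : ℝ) * (n * (n - 1))) := by
      rcases Nat.eq_zero_or_pos n with rfl | hp
      · simp
      · have : (1 : ℝ) ≤ n := by exact_mod_cast hp
        have : (0 : ℝ) ≤ n - 1 := by linarith
        positivity
    rw [Nat.descFactorial_succ]
    push_cast [Nat.cast_sub (by omega : n ≤ M)]
    rw [pow_succ]
    -- the two sides of the inductive step differ by `M ^ n * n² * (n - 1)`
    linarith

lemma two_mul_card_not_injective_le (N : ℕ) (hN : 2 ≤ N) :
    2 * ((univ.filter fun g : Fin N → Fin (N ^ 2) => ¬ Function.Injective g).card : ℝ) ≤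
      (Fintype.card (Fin N → Fin (N ^ 2)) : ℝ) := by
  have hc : (univ.filter fun g : Fin N → Fin (N ^ 2) => Function.Injective g).card =
      (N ^ 2).descFactorial N := by
    rw [← Fintype.card_subtype,
      Fintype.card_congr (Equiv.subtypeInjectiveEquivEmbedding (Fin N) (Fin (N ^ 2))),
      Fintype.card_embedding_eq]
    simp
  have hs := card_filter_add_card_filter_not (s := (univ : Finset (Fin N → Fin (N ^ 2))))
    (fun g => Function.Injective g)
  rw [hc, card_univ] at hs
  have hs' : ((N ^ 2).descFactorial N : ℝ) +
      ((univ.filter fun g : Fin N → Fin (N ^ 2) => ¬ Function.Injective g).card : ℝ) =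
      (Fintype.card (Fin N → Fin (N ^ 2)) : ℝ) := by exact_mod_cast hs
  have hb := birthday_descFactorial (N ^ 2) N (by nlinarith)
  have hT : (Fintype.card (Fin N → Fin (N ^ 2)) : ℝ) = ((N ^ 2 : ℕ) : ℝ) ^ N := by simp
  rw [← hT] at hb
  set T := (Fintype.card (Fin N → Fin (N ^ 2)) : ℝ)
  have hN' : (0 : ℝ) < N := by exact_mod_cast (by omega : 0 < N)
  have hT0 : 0 ≤ T := Nat.cast_nonneg _
  push_cast at hb
  have h3 : (N : ℝ) ^ 2 * T ≤ (N : ℝ) ^ 2 * (2 * ((N ^ 2).descFactorial N : ℝ)) := by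
    nlinarith [mul_nonneg hT0 hN'.le]
  have h4 := le_of_mul_le_mul_left h3 (by positivity)
  linarith

theorem stmt_7 (N : ℕ) (hN : 2 ≤ N) (a : ℝ) (ha : 0 < a) :
    1 - (N : ℝ) ^ (-a) ≤
      ((Finset.univ.filter fun G : Fin (⌈a * Real.logb 2 N⌉₊) → Fin N → Fin (N ^ 2) =>
            ∃ i, Function.Injective (G i)).card : ℝ) /
        (Fintype.card (Fin (⌈a * Real.logb 2 N⌉₊) → Fin N → Fin (N ^ 2)) : ℝ) := by
  have hk := Nat.le_ceil (a * Real.logb 2 N)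
  generalize ⌈a * Real.logb 2 N⌉₊ = k at hk ⊢
  have hN' : (0 : ℝ) < N := by exact_mod_cast (by omega : 0 < N)
  have hB := two_mul_card_not_injective_le N hN
  have hbad : (univ.filter fun G : Fin k → Fin N → Fin (N ^ 2) =>
      ¬ ∃ i, Function.Injective (G i)).card =
      (univ.filter fun g : Fin N → Fin (N ^ 2) => ¬ Function.Injective g).card ^ k := by
    rw [← Fintype.card_piFinset_const]
    congr 1
    ext G
    simp [Fintype.mem_piFinset]
  have hs := card_filter_add_card_filter_not
    (s := (univ : Finset (Fin k → Fin N → Fin (N ^ 2))))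
    (fun G => ∃ i, Function.Injective (G i))
  have hcard : Fintype.card (Fin k → Fin N → Fin (N ^ 2)) =
      Fintype.card (Fin N → Fin (N ^ 2)) ^ k := by
    rw [Fintype.card_fun, Fintype.card_fin]
  rw [hbad, card_univ, hcard] at hs
  rw [hcard]
  have hTpos : 0 < (Fintype.card (Fin N → Fin (N ^ 2)) : ℝ) := by
    have : 0 < N ^ 2 := by positivity
    simp only [Fintype.card_fun, Fintype.card_fin]
    positivity
  have hs' := congrArg (Nat.cast : ℕ → ℝ) hs
  push_cast only [Nat.cast_add, Nat.cast_pow] at hs' ⊢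
  generalize (Fintype.card (Fin N → Fin (N ^ 2)) : ℝ) = T at *
  have hB0 : (0 : ℝ) ≤
    ((univ.filter fun g : Fin N → Fin (N ^ 2) => ¬ Function.Injective g).card : ℝ) :=
    Nat.cast_nonneg _
  generalize ((univ.filter fun g : Fin N → Fin (N ^ 2) => ¬ Function.Injective g).card : ℝ) = B
    at *
  have h1 : B ^ k ≤ (T / 2) ^ k := by gcongr; linarith
  have h2 : ((1 : ℝ) / 2) ^ k ≤ (N : ℝ) ^ (-a) := by
    have e : (N : ℝ) ^ (-a) = (2 : ℝ) ^ (-(a * Real.logb 2 N)) := by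
      rw [show -(a * Real.logb 2 N) = Real.logb 2 N * (-a) by ring, Real.rpow_mul (by norm_num),
        Real.rpow_logb (by norm_num) (by norm_num) hN']
    have e2 : ((1 : ℝ) / 2) ^ k = (2 : ℝ) ^ (-(k : ℝ)) := by
      rw [Real.rpow_neg (by norm_num), Real.rpow_natCast, one_div, inv_pow]
    rw [e, e2]
    exact Real.rpow_le_rpow_of_exponent_le (by norm_num) (by linarith)
  have hTk : 0 < T ^ k := pow_pos hTpos k
  rw [le_div_iff₀ hTk]
  have h3 : (T / 2) ^ k = (1 / 2) ^ k * T ^ k := by rw [← mul_pow]; ring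
  have h4 := mul_le_mul_of_nonneg_right h2 hTk.le
  linarith
end

section
/- Let N ≥ 2 and f ≥ 1 be integers, let A be a subset of Fin N of cardinality m, and fix s₀ ∈ Fin f. Under the uniform probability measure on the set of all functions g : Fin N → Fin f, the probability that the preimage g⁻¹({s₀}) equals {a, b} for some a ∈ A and some b ∈ Fin N \ A is m·(N − m)·(1/f)²·(1 − 1/f)^{N−2}. -/
/-! The event that the fibre over `s₀` is `{a, b}` is the disjoint union, over pairs
`(a, b) ∈ A ×ˢ Aᶜ`, of the events that the fibre is that given two-element set; disjointness holds
because `a` and `b` are recovered from `{a, b}` as its elements inside and outside `A`. Functions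
with a prescribed fibre `S` over `s₀` form a box (`{s₀}` on `S`, `{s₀}ᶜ` off `S`), so there are
`(f - 1) ^ (N - #S)` of them (`card_fiber_eq`). -/

open Finset
open scoped Classical

/-- The number of maps whose fibre over `s₀` is exactly `S`: a map is free to take any of the other
`f - 1` values at each of the `N - #S` points off `S`. -/
theorem card_fiber_eq (N f : ℕ) (S : Finset (Fin N)) (s₀ : Fin f) :
    (Finset.univ.filter fun g : Fin N → Fin f => g ⁻¹' {s₀} = (S : Set (Fin N))).card =
      (f - 1) ^ (N - S.card) := by
  have h : (Finset.univ.filter fun g : Fin N → Fin f => g ⁻¹' {s₀} = (S : Set (Fin N))) =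
      Fintype.piFinset fun i => if i ∈ S then {s₀} else ({s₀}ᶜ : Finset (Fin f)) := by
    ext g
    simp only [mem_filter, mem_univ, true_and, Fintype.mem_piFinset, Set.ext_iff,
      Set.mem_preimage, Set.mem_singleton_iff, mem_coe]
    refine forall_congr' fun i => ?_
    by_cases hi : i ∈ S <;> simp [hi]
  have hc (i : Fin N) : (if i ∈ S then {s₀} else ({s₀}ᶜ : Finset (Fin f))).card =
      if i ∈ S then 1 else f - 1 := by
    split_ifs <;> simp [card_compl]
  rw [h, Fintype.card_piFinset, prod_congr rfl fun i _ => hc i, prod_ite, prod_const_one, one_mul,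
    prod_const]
  congr 1
  have : (Finset.univ.filter fun i => i ∉ S) = Sᶜ := by ext; simp
  rw [this, card_compl, Fintype.card_fin]

/-- The number of maps whose fibre over `s₀` consists of one element of `A` and one outside it. -/
theorem card_event (N f : ℕ) (A : Finset (Fin N)) (s₀ : Fin f) :
    (Finset.univ.filter fun g : Fin N → Fin f =>
        ∃ a ∈ A, ∃ b : Fin N, b ∉ A ∧ g ⁻¹' {s₀} = {a, b}).card =
      A.card * (N - A.card) * (f - 1) ^ (N - 2) := by
  have h : (Finset.univ.filter fun g : Fin N → Fin f =>
        ∃ a ∈ A, ∃ b : Fin N, b ∉ A ∧ g ⁻¹' {s₀} = {a, b}) =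
      (A ×ˢ Aᶜ).biUnion fun p => Finset.univ.filter fun g : Fin N → Fin f =>
        g ⁻¹' {s₀} = (({p.1, p.2} : Finset (Fin N)) : Set (Fin N)) := by
    ext g
    simp only [mem_filter, mem_univ, true_and, mem_biUnion, mem_product, mem_compl, Prod.exists,
      coe_insert, coe_singleton]
    constructor
    · rintro ⟨a, ha, b, hb, hg⟩
      exact ⟨a, b, ⟨ha, hb⟩, hg⟩
    · rintro ⟨a, b, ⟨ha, hb⟩, hg⟩
      exact ⟨a, ha, b, hb, hg⟩
  rw [h, card_biUnion]
  · have hs : ∀ p ∈ A ×ˢ Aᶜ, (Finset.univ.filter fun g : Fin N → Fin f =>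
        g ⁻¹' {s₀} = (({p.1, p.2} : Finset (Fin N)) : Set (Fin N))).card =
          (f - 1) ^ (N - 2) := by
      rintro ⟨a, b⟩ hp
      simp only [mem_product, mem_compl] at hp
      rw [card_fiber_eq, card_pair]
      intro (hab : a = b)
      exact hp.2 (hab ▸ hp.1)
    rw [sum_congr rfl hs, sum_const, card_product, card_compl, Fintype.card_fin, smul_eq_mul]
  · rintro ⟨a, b⟩ hp ⟨c, d⟩ hq hne
    simp only [mem_coe, mem_product, mem_compl] at hp hq
    rw [Function.onFun, disjoint_left]
    intro g hg hg'
    simp only [mem_filter, mem_univ, true_and] at hg hg'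
    have e : ({a, b} : Finset (Fin N)) = {c, d} := coe_injective (hg.symm.trans hg')
    have h1 : a ∈ ({c, d} : Finset (Fin N)) := e ▸ mem_insert_self a {b}
    have h2 : b ∈ ({c, d} : Finset (Fin N)) := e ▸ (by simp)
    simp only [mem_insert, mem_singleton] at h1 h2
    apply hne
    rcases h1 with rfl | rfl
    · rcases h2 with rfl | rfl
      · exact absurd hp.1 hp.2
      · rfl
    · exact absurd hp.1 hq.2

/-- Under the uniform probability measure on functions `g : Fin N → Fin f`,
the probability that the preimage of `{s₀}` equals `{a, b}` for some `a ∈ A`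
and some `b ∉ A` (where `A` has cardinality `m`) is
`m·(N − m)·(1/f)²·(1 − 1/f)^{N−2}`. -/
theorem stmt_10 (N f : ℕ) (hN : 2 ≤ N) (hf : 1 ≤ f)
    (A : Finset (Fin N)) (m : ℕ) (hA : A.card = m) (s₀ : Fin f) :
    ((Finset.univ.filter fun g : Fin N → Fin f =>
          ∃ a ∈ A, ∃ b : Fin N, b ∉ A ∧ g ⁻¹' {s₀} = {a, b}).card : ℝ) /
        (Fintype.card (Fin N → Fin f) : ℝ) =
      (m : ℝ) * ((N : ℝ) - (m : ℝ)) * (1 / (f : ℝ)) ^ 2 *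
        (1 - 1 / (f : ℝ)) ^ (N - 2) := by
  have hAN : A.card ≤ N := by simpa using card_le_univ A
  have hf0 : (f : ℝ) ≠ 0 := by positivity
  subst hA
  rw [card_event, Fintype.card_fun, Fintype.card_fin, Fintype.card_fin]
  push_cast [Nat.cast_sub hAN, Nat.cast_sub hf]
  obtain ⟨k, rfl⟩ := Nat.exists_eq_add_of_le hN
  have h1 : (1 - 1 / (f : ℝ)) = ((f : ℝ) - 1) / f := by field_simp
  rw [Nat.add_sub_cancel_left, h1, div_pow, div_pow, pow_add]
  field_simp
end
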